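/- Let g be a smooth Riemannian metric on ℝⁿ with α(x,y) = √(∑_{i,j} g_{ij}(x)·y^i·y^j), let b : ℝⁿ → ℝⁿ be smooth with ∂b_i/∂x^s = ∂b_s/∂x^i for all i, s (closed deforming 1-form), and suppose that the Randers function F(x,y) = α(x,y) + ∑_i b_i(x)·y^i is a Finsler function on ℝⁿ. Then F satisfies the Hamel equations in the standard coordinates if and only if α does; consequently, the Randers space (ℝⁿ, F) is rectilinear in the standard coordinates if and only if the Riemannian space (ℝⁿ, α) is rectilinear in the standard coordinates. -/

import Mathlib

open scoped BigOperators Topology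
noncomputable section

abbrev E (n : ℕ) := Fin n → ℝ

/-- Partial derivative with respect to the base coordinate `x^i`. -/
def pdx {n : ℕ} (i : Fin n) (f : E n × E n → ℝ) (p : E n × E n) : ℝ :=
  fderiv ℝ f p (Pi.single i 1, 0)

/-- Partial derivative with respect to the fibre coordinate `y^i`. -/
def pdy {n : ℕ} (i : Fin n) (f : E n × E n → ℝ) (p : E n × E n) : ℝ :=
  fderiv ℝ f p (0, Pi.single i 1)

/-- A Finsler function on `ℝⁿ`. -/
structure IsFinsler {n : ℕ} (F : E n × E n → ℝ) : Prop where
  smooth : ContDiffOn ℝ (⊤ : ℕ∞) F {p : E n × E n | p.2 ≠ 0}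
  homog : ∀ (x y : E n) (c : ℝ), 0 < c → F (x, c • y) = c * F (x, y)
  pos : ∀ (x y : E n), y ≠ 0 → 0 < F (x, y)
  posDef : ∀ (x y : E n), y ≠ 0 →
    (Matrix.of fun i j : Fin n =>
      (1 / 2) * pdy i (pdy j (fun p => F p ^ 2)) (x, y)).PosDef

/-- A geodesic of `(ℝⁿ, F)`: a `C²` curve on a nontrivial open interval, with nowhere
vanishing velocity, positive constant speed, satisfying the Euler–Lagrange equations. -/
structure IsGeodesic {n : ℕ} (F : E n × E n → ℝ) (γ : ℝ → E n) (t₁ t₂ : ℝ) : Prop where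
  lt : t₁ < t₂
  smooth : ContDiffOn ℝ 2 γ (Set.Ioo t₁ t₂)
  vel : ∀ t ∈ Set.Ioo t₁ t₂, deriv γ t ≠ 0
  constSpeed : ∃ c : ℝ, 0 < c ∧ ∀ t ∈ Set.Ioo t₁ t₂, F (γ t, deriv γ t) = c
  eulerLagrange : ∀ (i : Fin n), ∀ t ∈ Set.Ioo t₁ t₂,
    deriv (fun s => pdy i F (γ s, deriv γ s)) t = pdx i F (γ t, deriv γ t)

/-- The Hamel equations in the standard coordinates. -/
def SatisfiesHamel {n : ℕ} (F : E n × E n → ℝ) : Prop :=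
  ∀ (x y : E n), y ≠ 0 → ∀ i : Fin n,
    ∑ k, pdx k (pdy i F) (x, y) * y k = ∑ k, pdx i (pdy k F) (x, y) * y k

/-- `(ℝⁿ, F)` is rectilinear in the standard coordinates. -/
def Rectilinear {n : ℕ} (F : E n × E n → ℝ) : Prop :=
  ∀ (γ : ℝ → E n) (t₁ t₂ : ℝ), IsGeodesic F γ t₁ t₂ →
    ∃ (f : ℝ → ℝ) (a b : E n), a ≠ 0 ∧
      ContDiffOn ℝ 2 f (Set.Ioo t₁ t₂) ∧
      (∀ t ∈ Set.Ioo t₁ t₂, 0 < deriv f t) ∧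
      ∀ t ∈ Set.Ioo t₁ t₂, γ t = f t • a + b

/-- Partial derivative on `ℝⁿ` in the direction of the `i`-th coordinate. -/
def pd {n : ℕ} (i : Fin n) (f : E n → ℝ) (x : E n) : ℝ :=
  fderiv ℝ f x (Pi.single i 1)

/-!
A closed 1-form `β` is a null Lagrangian: it satisfies the Hamel equations, and its Euler–Lagrange
equations hold along every curve. Both systems are linear in the Lagrangian, so `α + β` and `α`
satisfy the Hamel equations simultaneously and have the same extremals. They do not have the same
geodesics, because constant speed means something different for `α + β` and for `α`. However, the
Euler–Lagrange equations of a positively homogeneous Lagrangian do not depend on the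
parametrization, so every extremal is locally a reparametrized geodesic. As the direction of the
velocity can be followed along a connected interval, rectilinearity is equivalent to the
straightness of all extremals, whatever their speed.
-/

section PartialDerivatives

variable {n : ℕ} {F G : E n × E n → ℝ} {p : E n × E n}

lemma differentiableAt_pdy (hF : ContDiffAt ℝ 2 F p) (i : Fin n) :
    DifferentiableAt ℝ (pdy i F) p := by
  have hderiv : ContDiffAt ℝ 1 (fderiv ℝ F) p := hF.fderiv_right (by norm_num)
  exact (hderiv.differentiableAt one_ne_zero).clm_apply (differentiableAt_const _)

lemma pdx_add (hF : DifferentiableAt ℝ F p) (hG : DifferentiableAt ℝ G p) (i : Fin n) :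
    pdx i (F + G) p = pdx i F p + pdx i G p := by
  simp only [pdx, fderiv_add hF hG, add_apply]

lemma pdy_add (hF : DifferentiableAt ℝ F p) (hG : DifferentiableAt ℝ G p) (i : Fin n) :
    pdy i (F + G) p = pdy i F p + pdy i G p := by
  simp only [pdy, fderiv_add hF hG, add_apply]

lemma pdy_add_eventuallyEq (hF : ContDiffAt ℝ 2 F p) (hG : ContDiffAt ℝ 2 G p) (i : Fin n) :
    pdy i (F + G) =ᶠ[𝓝 p] pdy i F + pdy i G := by
  filter_upwards [hF.eventually (by simp), hG.eventually (by simp)] with q hFq hGq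
  exact pdy_add (hFq.differentiableAt two_ne_zero) (hGq.differentiableAt two_ne_zero) i

lemma pdx_pdy_add (hF : ContDiffAt ℝ 2 F p) (hG : ContDiffAt ℝ 2 G p) (i k : Fin n) :
    pdx k (pdy i (F + G)) p = pdx k (pdy i F) p + pdx k (pdy i G) p := by
  rw [← pdx_add (differentiableAt_pdy hF i) (differentiableAt_pdy hG i) k, pdx, pdx,
    (pdy_add_eventuallyEq hF hG i).fderiv_eq]

lemma fderiv_apply_eq_sum_pd (f : E n → ℝ) (x w : E n) :
    fderiv ℝ f x w = ∑ k, pd k f x * w k := by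
  have hbasis : w = ∑ k, w k • (Pi.single k 1 : E n) := pi_eq_sum_univ' w
  conv_lhs => rw [hbasis]
  simp only [map_sum, map_smul, smul_eq_mul, mul_comm, pd]

lemma satisfiesHamel_add_iff_left (hF : ∀ p : E n × E n, p.2 ≠ 0 → ContDiffAt ℝ 2 F p)
    (hG : ∀ p : E n × E n, p.2 ≠ 0 → ContDiffAt ℝ 2 G p) (hHamel : SatisfiesHamel G) :
    SatisfiesHamel (F + G) ↔ SatisfiesHamel F := by
  refine forall₄_congr fun x y hy i => ?_
  simp only [pdx_pdy_add (hF (x, y) hy) (hG (x, y) hy), add_mul, Finset.sum_add_distrib,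
    hHamel x y hy i, add_left_inj]

end PartialDerivatives

section Homogeneity

variable {n : ℕ} {F : E n × E n → ℝ}

/-- Positive 1-homogeneity in the fibre variable. -/
def IsPosHomogeneous (F : E n × E n → ℝ) : Prop :=
  ∀ (x y : E n) (c : ℝ), 0 < c → F (x, c • y) = c * F (x, y)

namespace IsPosHomogeneous

lemma fderiv_smul (hF : IsPosHomogeneous F) (x y u w : E n) {c : ℝ} (hc : 0 < c) :
    fderiv ℝ F (x, c • y) (u, c • w) = c * fderiv ℝ F (x, y) (u, w) := by
  let scale : (E n × E n) ≃L[ℝ] E n × E n :=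
    (ContinuousLinearEquiv.refl ℝ (E n)).prodCongr
      (ContinuousLinearEquiv.smulLeft (Units.mk0 c hc.ne'))
  have hscale : F ∘ scale = c • F := funext fun p => hF p.1 p.2 c hc
  have hfderiv : (fderiv ℝ F (x, c • y)).comp (scale : E n × E n →L[ℝ] E n × E n) =
      c • fderiv ℝ F (x, y) := by
    have hconst := congrFun (fderiv_const_smul_field (𝕜 := ℝ) c (f := F)) (x, y)
    rw [← hscale, scale.comp_right_fderiv] at hconst
    exact hconst
  exact DFunLike.congr_fun hfderiv (u, w)

lemma pdx_smul (hF : IsPosHomogeneous F) (x y : E n) {c : ℝ} (hc : 0 < c) (i : Fin n) :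
    pdx i F (x, c • y) = c * pdx i F (x, y) := by
  simpa only [pdx, smul_zero] using hF.fderiv_smul x y (Pi.single i 1) 0 hc

lemma pdy_smul (hF : IsPosHomogeneous F) (x y : E n) {c : ℝ} (hc : 0 < c) (i : Fin n) :
    pdy i F (x, c • y) = pdy i F (x, y) := by
  have hscaled := hF.fderiv_smul x y 0 (Pi.single i 1) hc
  rw [← smul_zero c, ← Prod.smul_mk, map_smul, smul_zero, smul_eq_mul] at hscaled
  exact mul_left_cancel₀ hc.ne' hscaled

end IsPosHomogeneous

end Homogeneity

section EulerLagrange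

variable {n : ℕ} {F G : E n × E n → ℝ} {γ : ℝ → E n} {τ : ℝ → ℝ} {r t : ℝ}

/-- The Euler–Lagrange equations of the Lagrangian `F` for the curve `γ` at the time `t`. -/
def EulerLagrangeAt (F : E n × E n → ℝ) (γ : ℝ → E n) (t : ℝ) : Prop :=
  ∀ i : Fin n, deriv (fun s => pdy i F (γ s, deriv γ s)) t = pdx i F (γ t, deriv γ t)

lemma contDiffAt_prodMk_deriv (hγ : ContDiffAt ℝ 2 γ t) :
    ContDiffAt ℝ 1 (fun s => (γ s, deriv γ s)) t :=
  (hγ.of_le one_le_two).prodMk (hγ.derivWithin (by norm_num))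

lemma differentiableAt_pdy_comp (hF : ContDiffAt ℝ 2 F (γ t, deriv γ t))
    (hγ : ContDiffAt ℝ 2 γ t) (i : Fin n) :
    DifferentiableAt ℝ (fun s => pdy i F (γ s, deriv γ s)) t :=
  DifferentiableAt.comp t (g := pdy i F) (f := fun s => (γ s, deriv γ s))
    (differentiableAt_pdy hF i)
    ((contDiffAt_prodMk_deriv hγ).differentiableAt one_ne_zero)

lemma eulerLagrangeAt_add_iff_left (hF : ContDiffAt ℝ 2 F (γ t, deriv γ t))
    (hG : ContDiffAt ℝ 2 G (γ t, deriv γ t)) (hγ : ContDiffAt ℝ 2 γ t)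
    (hEL : EulerLagrangeAt G γ t) : EulerLagrangeAt (F + G) γ t ↔ EulerLagrangeAt F γ t := by
  refine forall_congr' fun i => ?_
  have hsplit : (fun s => pdy i (F + G) (γ s, deriv γ s)) =ᶠ[𝓝 t]
      fun s => pdy i F (γ s, deriv γ s) + pdy i G (γ s, deriv γ s) :=
    (contDiffAt_prodMk_deriv hγ).continuousAt.eventually (pdy_add_eventuallyEq hF hG i)
  rw [hsplit.deriv_eq, deriv_fun_add (differentiableAt_pdy_comp hF hγ i)
    (differentiableAt_pdy_comp hG hγ i), hEL i, pdx_add (hF.differentiableAt two_ne_zero)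
    (hG.differentiableAt two_ne_zero), add_left_inj]

lemma IsPosHomogeneous.eulerLagrangeAt_comp (hF : IsPosHomogeneous F)
    (hFsmooth : ContDiffAt ℝ 2 F (γ (τ r), deriv γ (τ r))) (hγ : ContDiffAt ℝ 2 γ (τ r))
    (hτ : ContDiffAt ℝ 2 τ r) (hτpos : 0 < deriv τ r) (hEL : EulerLagrangeAt F γ (τ r)) :
    EulerLagrangeAt F (γ ∘ τ) r := by
  intro i
  have hvel : ∀ᶠ q in 𝓝 r, deriv (γ ∘ τ) q = deriv τ q • deriv γ (τ q) := by
    filter_upwards [hτ.eventually (by simp), hτ.continuousAt.eventually (hγ.eventually (by simp))]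
      with q hτq hγq
    exact deriv.scomp q (hγq.differentiableAt two_ne_zero) (hτq.differentiableAt two_ne_zero)
  have hτ'cont : ContinuousAt (deriv τ) r :=
    (hτ.derivWithin (m := 1) (by norm_num)).continuousAt
  have hmomentum : (fun q => pdy i F ((γ ∘ τ) q, deriv (γ ∘ τ) q)) =ᶠ[𝓝 r]
      (fun s => pdy i F (γ s, deriv γ s)) ∘ τ := by
    filter_upwards [hvel, hτ'cont.eventually (lt_mem_nhds hτpos)] with q hq hqpos
    rw [hq]
    exact hF.pdy_smul _ _ hqpos i
  rw [hmomentum.deriv_eq, deriv_comp r (differentiableAt_pdy_comp hFsmooth hγ i)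
    (hτ.differentiableAt two_ne_zero), hEL i, hvel.self_of_nhds, Function.comp_apply,
    hF.pdx_smul _ _ hτpos, mul_comm]

end EulerLagrange

section IntegralCurves

variable {V : Type*} [NormedAddCommGroup V] [NormedSpace ℝ V]

lemma contDiffAt_succ_of_eventually_hasDerivAt {f f' : ℝ → V} {t : ℝ} {k : ℕ}
    (hf : ∀ᶠ s in 𝓝 t, HasDerivAt f (f' s) s) (hf' : ContDiffAt ℝ k f' t) :
    ContDiffAt ℝ (k + 1) f t :=
  contDiffAt_succ_iff_hasFDerivAt.2 ⟨fun s => ContinuousLinearMap.toSpanSingleton ℝ (f' s),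
    ⟨_, hf, fun _ hs => hs.hasFDerivAt⟩,
    (ContinuousLinearMap.toSpanSingletonCLE (𝕜 := ℝ) (E := V)).contDiff.contDiffAt.comp t hf'⟩

lemma contDiffAt_two_of_eventually_hasDerivAt_comp {v : V → V} {c : ℝ → V} {t : ℝ}
    (hv : ContDiffAt ℝ 1 v (c t)) (hc : ∀ᶠ s in 𝓝 t, HasDerivAt c (v (c s)) s) :
    ContDiffAt ℝ 2 c t := by
  have hc0 : ContDiffAt ℝ 0 c t :=
    contDiffAt_zero.2 ⟨_, hc, fun s hs => hs.continuousAt.continuousWithinAt⟩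
  have hc1 : ContDiffAt ℝ 1 c t := by
    simpa using contDiffAt_succ_of_eventually_hasDerivAt (k := 0) hc
      ((hv.of_le zero_le_one).comp t hc0)
  exact contDiffAt_succ_of_eventually_hasDerivAt (k := 1) hc (hv.comp t hc1)

lemma exists_contDiffAt_two_integralCurve [CompleteSpace V] {v : V → V} {x : V}
    (hv : ContDiffAt ℝ 1 v x) :
    ∃ c : ℝ → V, c 0 = x ∧ ∀ᶠ t in 𝓝 0, ContDiffAt ℝ 2 c t ∧ HasDerivAt c (v (c t)) t := by
  obtain ⟨c, hc0, ε, hε, hc⟩ :=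
    hv.exists_forall_mem_closedBall_exists_eq_forall_mem_Ioo_hasDerivAt₀ 0
  have hderiv : ∀ᶠ t in 𝓝 0, HasDerivAt c (v (c t)) t := by
    filter_upwards [Ioo_mem_nhds (sub_lt_self 0 hε) (lt_add_of_pos_right 0 hε)] with t ht
    exact hc t ht
  have hvc : ∀ᶠ t in 𝓝 0, ContDiffAt ℝ 1 v (c t) := by
    refine hderiv.self_of_nhds.continuousAt.eventually (p := ContDiffAt ℝ 1 v) ?_
    exact hc0.symm ▸ hv.eventually (by simp)
  refine ⟨c, hc0, ?_⟩
  filter_upwards [hderiv.eventually_nhds, hvc] with t ht hvt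
  exact ⟨contDiffAt_two_of_eventually_hasDerivAt_comp hvt ht, ht.self_of_nhds⟩

end IntegralCurves

section StraightCurves

variable {n : ℕ} {γ : ℝ → E n} {t₁ t₂ : ℝ}

/-- `γ` runs along a line in a fixed direction on `(t₁, t₂)`: the conclusion demanded of geodesics
in `Rectilinear`. -/
def IsStraightOn (γ : ℝ → E n) (t₁ t₂ : ℝ) : Prop :=
  ∃ (f : ℝ → ℝ) (a b : E n), a ≠ 0 ∧
    ContDiffOn ℝ 2 f (Set.Ioo t₁ t₂) ∧
    (∀ t ∈ Set.Ioo t₁ t₂, 0 < deriv f t) ∧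
    ∀ t ∈ Set.Ioo t₁ t₂, γ t = f t • a + b

lemma IsStraightOn.sameRay_deriv (hγ : IsStraightOn γ t₁ t₂) {s t : ℝ} (hs : s ∈ Set.Ioo t₁ t₂)
    (ht : t ∈ Set.Ioo t₁ t₂) : SameRay ℝ (deriv γ s) (deriv γ t) := by
  obtain ⟨f, a, b, -, hf, hfpos, hγeq⟩ := hγ
  have hderiv : ∀ q ∈ Set.Ioo t₁ t₂, deriv γ q = deriv f q • a := by
    intro q hq
    have hfq : DifferentiableAt ℝ f q :=
      (hf.contDiffAt (isOpen_Ioo.mem_nhds hq)).differentiableAt two_ne_zero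
    have heq : γ =ᶠ[𝓝 q] fun u => f u • a + b := by
      filter_upwards [isOpen_Ioo.mem_nhds hq] with u hu using hγeq u hu
    rw [heq.deriv_eq, deriv_add_const, deriv_smul_const hfq]
  rw [hderiv s hs, hderiv t ht]
  exact ((SameRay.refl a).pos_smul_left (hfpos s hs)).pos_smul_right (hfpos t ht)

lemma isStraightOn_of_hasDerivAt_smul {a : E n} (ha : a ≠ 0) {ρ : ℝ → ℝ}
    (hsmooth : ContDiffOn ℝ 2 γ (Set.Ioo t₁ t₂)) (hρ : ∀ t ∈ Set.Ioo t₁ t₂, 0 < ρ t)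
    (hγ : ∀ t ∈ Set.Ioo t₁ t₂, HasDerivAt γ (ρ t • a) t) : IsStraightOn γ t₁ t₂ := by
  obtain ⟨i, hi⟩ : ∃ i, a i ≠ 0 := Function.ne_iff.1 ha
  have hcoord : ∀ t ∈ Set.Ioo t₁ t₂, HasDerivAt (fun s => γ s i / a i) (ρ t) t := by
    intro t ht
    simpa [hi] using (hasDerivAt_pi.1 (hγ t ht) i).div_const (a i)
  have hoffset : ∀ t ∈ Set.Ioo t₁ t₂, HasDerivAt (fun s => γ s - (γ s i / a i) • a) 0 t := by
    intro t ht
    simpa only [sub_self] using (hγ t ht).fun_sub ((hcoord t ht).smul_const a)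
  obtain ⟨b, hb⟩ := isOpen_Ioo.exists_is_const_of_deriv_eq_zero isPreconnected_Ioo
    (fun t ht => (hoffset t ht).differentiableAt.differentiableWithinAt)
    (fun t ht => (hoffset t ht).deriv)
  refine ⟨fun t => γ t i / a i, a, b, ha, (contDiffOn_pi.1 hsmooth i).div_const _, ?_, ?_⟩
  · intro t ht
    exact (hcoord t ht).deriv.symm ▸ hρ t ht
  · intro t ht
    rw [← hb t ht, add_sub_cancel]

lemma isStraightOn_of_sameRay_deriv (hlt : t₁ < t₂) (hsmooth : ContDiffOn ℝ 2 γ (Set.Ioo t₁ t₂))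
    (hvel : ∀ t ∈ Set.Ioo t₁ t₂, deriv γ t ≠ 0)
    (hray : ∀ s ∈ Set.Ioo t₁ t₂, ∀ t ∈ Set.Ioo t₁ t₂, SameRay ℝ (deriv γ s) (deriv γ t)) :
    IsStraightOn γ t₁ t₂ := by
  obtain ⟨m, hm⟩ := Set.nonempty_Ioo.2 hlt
  have hmul : ∀ t ∈ Set.Ioo t₁ t₂, ∃ k : ℝ, 0 < k ∧ k • deriv γ m = deriv γ t := fun t ht =>
    (exists_pos_left_iff_sameRay (hvel m hm) (hvel t ht)).2 (hray m hm t ht)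
  choose! ρ hρ hρ_smul using hmul
  refine isStraightOn_of_hasDerivAt_smul (hvel m hm) hsmooth hρ fun t ht => ?_
  rw [hρ_smul t ht]
  exact ((hsmooth.contDiffAt (isOpen_Ioo.mem_nhds ht)).differentiableAt two_ne_zero).hasDerivAt

lemma isStraightOn_of_eventually_sameRay_deriv (hlt : t₁ < t₂)
    (hsmooth : ContDiffOn ℝ 2 γ (Set.Ioo t₁ t₂)) (hvel : ∀ t ∈ Set.Ioo t₁ t₂, deriv γ t ≠ 0)
    (hray : ∀ s ∈ Set.Ioo t₁ t₂, ∀ᶠ t in 𝓝 s, SameRay ℝ (deriv γ s) (deriv γ t)) :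
    IsStraightOn γ t₁ t₂ := by
  refine isStraightOn_of_sameRay_deriv hlt hsmooth hvel fun s hs t ht => ?_
  exact isPreconnected_Ioo.induction₂ (fun u v => SameRay ℝ (deriv γ u) (deriv γ v))
    (fun u hu => nhdsWithin_le_nhds (hray u hu))
    (fun u v w _ hv _ huv hvw => huv.trans hvw fun h => absurd h (hvel v hv))
    (fun u v _ _ huv => huv.symm) hs ht

end StraightCurves

section Extremals

variable {n : ℕ} {F : E n × E n → ℝ} {γ : ℝ → E n} {t₀ t₁ t₂ : ℝ}

/-- A parametric Lagrangian: a Finsler function without the strong convexity condition and with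
only `C²` regularity away from the zero section. -/
structure IsParametricLagrangian (F : E n × E n → ℝ) : Prop where
  contDiffAt : ∀ p : E n × E n, p.2 ≠ 0 → ContDiffAt ℝ 2 F p
  homog : IsPosHomogeneous F
  pos : ∀ x y : E n, y ≠ 0 → 0 < F (x, y)

/-- An extremal of `F`: a geodesic without the constant speed condition. For homogeneous `F` this
notion is invariant under reparametrization. -/
structure IsExtremal (F : E n × E n → ℝ) (γ : ℝ → E n) (t₁ t₂ : ℝ) : Prop where
  lt : t₁ < t₂
  smooth : ContDiffOn ℝ 2 γ (Set.Ioo t₁ t₂)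
  vel : ∀ t ∈ Set.Ioo t₁ t₂, deriv γ t ≠ 0
  eulerLagrange : ∀ t ∈ Set.Ioo t₁ t₂, EulerLagrangeAt F γ t

lemma IsGeodesic.isExtremal (hγ : IsGeodesic F γ t₁ t₂) : IsExtremal F γ t₁ t₂ :=
  ⟨hγ.lt, hγ.smooth, hγ.vel, fun t ht i => hγ.eulerLagrange i t ht⟩

lemma IsExtremal.contDiffAt (hγ : IsExtremal F γ t₁ t₂) {t : ℝ} (ht : t ∈ Set.Ioo t₁ t₂) :
    ContDiffAt ℝ 2 γ t :=
  hγ.smooth.contDiffAt (isOpen_Ioo.mem_nhds ht)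

namespace IsParametricLagrangian

lemma exists_unitSpeed_reparametrization (hF : IsParametricLagrangian F)
    (hγ : ContDiffAt ℝ 2 γ t₀) (hvel : deriv γ t₀ ≠ 0) :
    ∃ τ : ℝ → ℝ, τ 0 = t₀ ∧ ∀ᶠ r in 𝓝 0, ContDiffAt ℝ 2 τ r ∧ 0 < deriv τ r ∧
      F (γ (τ r), deriv τ r • deriv γ (τ r)) = 1 := by
  have hlift := contDiffAt_prodMk_deriv hγ
  have hspeed : ContDiffAt ℝ 1 (fun t => F (γ t, deriv γ t)) t₀ :=
    ContDiffAt.comp t₀ ((hF.contDiffAt (γ t₀, deriv γ t₀) hvel).of_le one_le_two) hlift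
  -- The inverse of the arc length function solves `τ' = 1 / F(γ(τ), γ'(τ))`.
  obtain ⟨τ, hτ0, hτ⟩ :=
    exists_contDiffAt_two_integralCurve (hspeed.inv (hF.pos _ _ hvel).ne')
  have hvel_near : ∀ᶠ r in 𝓝 0, deriv γ (τ r) ≠ 0 := by
    refine hτ.self_of_nhds.1.continuousAt.eventually (p := fun t => deriv γ t ≠ 0) ?_
    exact hτ0.symm ▸ hlift.continuousAt.snd.eventually_ne hvel
  refine ⟨τ, hτ0, ?_⟩
  filter_upwards [hτ, hvel_near] with r ⟨hτr, hτ'r⟩ hvelr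
  have hpos : 0 < F (γ (τ r), deriv γ (τ r)) := hF.pos _ _ hvelr
  rw [hτ'r.deriv, Pi.inv_apply, hF.homog _ _ _ (inv_pos.2 hpos)]
  exact ⟨hτr, inv_pos.2 hpos, inv_mul_cancel₀ hpos.ne'⟩

lemma isGeodesic_comp (hF : IsParametricLagrangian F) (hγ : IsExtremal F γ t₁ t₂) {τ : ℝ → ℝ}
    {r₁ r₂ : ℝ} (hlt : r₁ < r₂) (hmaps : Set.MapsTo τ (Set.Ioo r₁ r₂) (Set.Ioo t₁ t₂))
    (hτ : ∀ r ∈ Set.Ioo r₁ r₂, ContDiffAt ℝ 2 τ r)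
    (hτpos : ∀ r ∈ Set.Ioo r₁ r₂, 0 < deriv τ r)
    (hunit : ∀ r ∈ Set.Ioo r₁ r₂, F (γ (τ r), deriv τ r • deriv γ (τ r)) = 1) :
    IsGeodesic F (γ ∘ τ) r₁ r₂ := by
  have hvel : ∀ r ∈ Set.Ioo r₁ r₂, deriv (γ ∘ τ) r = deriv τ r • deriv γ (τ r) := fun r hr =>
    deriv.scomp r ((hγ.contDiffAt (hmaps hr)).differentiableAt two_ne_zero)
      ((hτ r hr).differentiableAt two_ne_zero)
  refine ⟨hlt, hγ.smooth.comp (fun r hr => (hτ r hr).contDiffWithinAt) hmaps, fun r hr => ?_,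
    ⟨1, one_pos, fun r hr => ?_⟩, fun i r hr => ?_⟩
  · rw [hvel r hr]
    exact smul_ne_zero (hτpos r hr).ne' (hγ.vel _ (hmaps hr))
  · rw [hvel r hr]
    exact hunit r hr
  · exact hF.homog.eulerLagrangeAt_comp (hF.contDiffAt (_, _) (hγ.vel _ (hmaps hr)))
      (hγ.contDiffAt (hmaps hr)) (hτ r hr) (hτpos r hr) (hγ.eulerLagrange _ (hmaps hr)) i

lemma eventually_sameRay_deriv (hF : IsParametricLagrangian F) (hrect : Rectilinear F)
    (hγ : IsExtremal F γ t₁ t₂) (ht₀ : t₀ ∈ Set.Ioo t₁ t₂) :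
    ∀ᶠ t in 𝓝 t₀, SameRay ℝ (deriv γ t₀) (deriv γ t) := by
  obtain ⟨τ, rfl, hτ⟩ :=
    hF.exists_unitSpeed_reparametrization (hγ.contDiffAt ht₀) (hγ.vel t₀ ht₀)
  obtain ⟨hτ0, hτ0pos, -⟩ := hτ.self_of_nhds
  obtain ⟨ε, hε, hball⟩ := Metric.eventually_nhds_iff_ball.1
    (hτ.and (hτ0.continuousAt.eventually (isOpen_Ioo.mem_nhds ht₀)))
  rw [Real.ball_eq_Ioo] at hball
  have hgeod : IsGeodesic F (γ ∘ τ) (0 - ε) (0 + ε) :=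
    hF.isGeodesic_comp hγ (by linarith) (fun r hr => (hball r hr).2)
      (fun r hr => (hball r hr).1.1) (fun r hr => (hball r hr).1.2.1)
      (fun r hr => (hball r hr).1.2.2)
  have hstraight : IsStraightOn (γ ∘ τ) (0 - ε) (0 + ε) := hrect _ _ _ hgeod
  have hray : ∀ r ∈ Set.Ioo (0 - ε) (0 + ε), SameRay ℝ (deriv γ (τ r)) (deriv (γ ∘ τ) r) := by
    intro r hr
    obtain ⟨⟨hτr, hτrpos, -⟩, hmem⟩ := hball r hr
    rw [deriv.scomp r ((hγ.contDiffAt hmem).differentiableAt two_ne_zero)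
      (hτr.differentiableAt two_ne_zero)]
    exact SameRay.sameRay_pos_smul_right _ hτrpos
  have hzero : (0 : ℝ) ∈ Set.Ioo (0 - ε) (0 + ε) := ⟨by linarith, by linarith⟩
  rw [← (hτ0.hasStrictDerivAt two_ne_zero).map_nhds_eq hτ0pos.ne', Filter.eventually_map]
  filter_upwards [isOpen_Ioo.mem_nhds hzero] with r hr
  have hne {q : ℝ} (hq : q ∈ Set.Ioo (0 - ε) (0 + ε)) : deriv (γ ∘ τ) q ≠ 0 := hgeod.vel q hq
  exact ((hray 0 hzero).trans (hstraight.sameRay_deriv hzero hr)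
    fun h => absurd h (hne hzero)).trans (hray r hr).symm fun h => absurd h (hne hr)

theorem rectilinear_iff_isExtremal (hF : IsParametricLagrangian F) :
    Rectilinear F ↔ ∀ γ t₁ t₂, IsExtremal F γ t₁ t₂ → IsStraightOn γ t₁ t₂ := by
  refine ⟨fun hrect γ t₁ t₂ hγ => ?_, fun h γ t₁ t₂ hγ => h γ t₁ t₂ hγ.isExtremal⟩
  exact isStraightOn_of_eventually_sameRay_deriv hγ.lt hγ.smooth hγ.vel
    fun s hs => hF.eventually_sameRay_deriv hrect hγ hs

end IsParametricLagrangian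

end Extremals

section OneForms

variable {n : ℕ} {b : E n → E n} {α : E n × E n → ℝ}

/-- The 1-form with components `b i`, as a fibrewise linear function on the tangent bundle. -/
def oneForm (b : E n → E n) (p : E n × E n) : ℝ :=
  ∑ i, b p.1 i * p.2 i

/-- Closedness of the 1-form with components `b i`. -/
def IsClosedOneForm (b : E n → E n) : Prop :=
  ∀ (i s : Fin n) (x : E n), pd s (fun x' => b x' i) x = pd i (fun x' => b x' s) x

lemma contDiff_oneForm {k : WithTop ℕ∞} (hb : ContDiff ℝ k b) : ContDiff ℝ k (oneForm b) :=
  ContDiff.sum fun i _ => ((contDiff_pi.1 hb i).comp contDiff_fst).mul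
    (contDiff_pi.1 contDiff_snd i)

lemma isPosHomogeneous_oneForm (b : E n → E n) : IsPosHomogeneous (oneForm b) := by
  intro x y c _
  simp only [oneForm, Pi.smul_apply, smul_eq_mul, Finset.mul_sum, mul_left_comm]

lemma fderiv_oneForm_apply {p : E n × E n} (hb : DifferentiableAt ℝ b p.1) (w : E n × E n) :
    fderiv ℝ (oneForm b) p w =
      ∑ i, (b p.1 i * w.2 i + p.2 i * fderiv ℝ (fun x => b x i) p.1 w.1) := by
  have hcomp (i : Fin n) : HasFDerivAt (fun q : E n × E n => b q.1 i)
      ((fderiv ℝ (fun x => b x i) p.1).comp (ContinuousLinearMap.fst ℝ (E n) (E n))) p :=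
    HasFDerivAt.comp p (g := fun x => b x i) (differentiableAt_pi.1 hb i).hasFDerivAt
      hasFDerivAt_fst
  have hfibre (i : Fin n) : HasFDerivAt (fun q : E n × E n => q.2 i)
      ((ContinuousLinearMap.proj i).comp (ContinuousLinearMap.snd ℝ (E n) (E n))) p :=
    hasFDerivAt_pi'.1 hasFDerivAt_snd i
  have hsum : HasFDerivAt (oneForm b) _ p :=
    HasFDerivAt.fun_sum (u := Finset.univ) fun i _ => (hcomp i).fun_mul (hfibre i)
  rw [hsum.fderiv]
  simp

lemma pdx_oneForm {p : E n × E n} (hb : DifferentiableAt ℝ b p.1) (i : Fin n) :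
    pdx i (oneForm b) p = ∑ k, pd i (fun x => b x k) p.1 * p.2 k := by
  simp [pdx, pd, fderiv_oneForm_apply hb, mul_comm]

lemma pdy_oneForm (hb : Differentiable ℝ b) (i : Fin n) :
    pdy i (oneForm b) = fun p => b p.1 i := by
  funext p
  simp [pdy, fderiv_oneForm_apply (hb p.1), Pi.single_apply]

lemma pdx_pdy_oneForm (hb : Differentiable ℝ b) (i k : Fin n) (p : E n × E n) :
    pdx k (pdy i (oneForm b)) p = pd k (fun x => b x i) p.1 := by
  have hchain := fderiv_comp p (g := fun x => b x i) (f := Prod.fst)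
    (differentiableAt_pi.1 (hb p.1) i) differentiableAt_fst
  rw [pdy_oneForm hb, pdx, pd]
  exact (DFunLike.congr_fun hchain _).trans (by simp [fderiv_fst])

namespace IsClosedOneForm

lemma satisfiesHamel (hclosed : IsClosedOneForm b) (hb : Differentiable ℝ b) :
    SatisfiesHamel (oneForm b) := by
  intro x y _ i
  simp only [pdx_pdy_oneForm hb, hclosed i]

lemma eulerLagrangeAt (hclosed : IsClosedOneForm b) (hb : Differentiable ℝ b) {γ : ℝ → E n}
    {t : ℝ} (hγ : DifferentiableAt ℝ γ t) : EulerLagrangeAt (oneForm b) γ t := by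
  intro i
  have hchain : HasDerivAt (fun s => b (γ s) i) (fderiv ℝ (fun x => b x i) (γ t) (deriv γ t)) t :=
    (differentiableAt_pi.1 (hb (γ t)) i).hasFDerivAt.comp_hasDerivAt t hγ.hasDerivAt
  rw [pdy_oneForm hb, hchain.deriv, fderiv_apply_eq_sum_pd, pdx_oneForm (hb (γ t))]
  simp only [hclosed i]

lemma isExtremal_add_oneForm_iff (hclosed : IsClosedOneForm b) (hb : ContDiff ℝ 2 b)
    (hα : ∀ p : E n × E n, p.2 ≠ 0 → ContDiffAt ℝ 2 α p) {γ : ℝ → E n} {t₁ t₂ : ℝ} :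
    IsExtremal (α + oneForm b) γ t₁ t₂ ↔ IsExtremal α γ t₁ t₂ := by
  have hEL {t : ℝ} (hγ : ContDiffAt ℝ 2 γ t) (hvel : deriv γ t ≠ 0) :
      EulerLagrangeAt (α + oneForm b) γ t ↔ EulerLagrangeAt α γ t :=
    eulerLagrangeAt_add_iff_left (hα (_, _) hvel) (contDiff_oneForm hb).contDiffAt hγ
      (hclosed.eulerLagrangeAt (hb.differentiable two_ne_zero) (hγ.differentiableAt two_ne_zero))
  constructor <;> intro hγ <;> refine ⟨hγ.lt, hγ.smooth, hγ.vel, fun t ht => ?_⟩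
  · exact (hEL (hγ.contDiffAt ht) (hγ.vel t ht)).1 (hγ.eulerLagrange t ht)
  · exact (hEL (hγ.contDiffAt ht) (hγ.vel t ht)).2 (hγ.eulerLagrange t ht)

end IsClosedOneForm

lemma IsParametricLagrangian.add_oneForm (hα : IsParametricLagrangian α) (hb : ContDiff ℝ 2 b)
    (hpos : ∀ x y : E n, y ≠ 0 → 0 < (α + oneForm b) (x, y)) :
    IsParametricLagrangian (α + oneForm b) where
  contDiffAt p hp := (hα.contDiffAt p hp).add (contDiff_oneForm hb).contDiffAt
  homog x y c hc := by
    simp only [Pi.add_apply, hα.homog x y c hc, isPosHomogeneous_oneForm b x y c hc, mul_add]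
  pos := hpos

end OneForms

section RiemannianMetrics

variable {n : ℕ} {g : E n → Matrix (Fin n) (Fin n) ℝ}

/-- The norm on tangent vectors defined by the Riemannian metric with matrix `g`. -/
def riemannianNorm (g : E n → Matrix (Fin n) (Fin n) ℝ) (p : E n × E n) : ℝ :=
  Real.sqrt (∑ i, ∑ j, g p.1 i j * p.2 i * p.2 j)

lemma sum_sum_mul_mul_pos_of_posDef {ι : Type*} [Fintype ι] {A : Matrix ι ι ℝ} (hA : A.PosDef)
    {y : ι → ℝ} (hy : y ≠ 0) : 0 < ∑ i, ∑ j, A i j * y i * y j := by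
  refine (hA.dotProduct_mulVec_pos hy).trans_eq ?_
  simp only [dotProduct, Matrix.mulVec, Finset.mul_sum, star_trivial, mul_assoc, mul_left_comm]

lemma isParametricLagrangian_riemannianNorm (hg : ∀ i j, ContDiff ℝ 2 fun x => g x i j)
    (hgpos : ∀ x, (g x).PosDef) : IsParametricLagrangian (riemannianNorm g) where
  contDiffAt p hp := by
    refine ContDiffAt.sqrt (ContDiff.contDiffAt ?_)
      (sum_sum_mul_mul_pos_of_posDef (hgpos p.1) hp).ne'
    exact ContDiff.sum fun i _ => ContDiff.sum fun j _ =>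
      (((hg i j).comp contDiff_fst).mul (contDiff_pi.1 contDiff_snd i)).mul
        (contDiff_pi.1 contDiff_snd j)
  homog x y c hc := by
    have hquad : ∑ i, ∑ j, g x i j * (c • y) i * (c • y) j =
        c ^ 2 * ∑ i, ∑ j, g x i j * y i * y j := by
      simp only [Pi.smul_apply, smul_eq_mul, Finset.mul_sum]
      exact Finset.sum_congr rfl fun i _ => Finset.sum_congr rfl fun j _ => by ring
    simp only [riemannianNorm]
    rw [hquad, Real.sqrt_mul (sq_nonneg c), Real.sqrt_sq hc.le]
  pos x _ hy := Real.sqrt_pos.2 (sum_sum_mul_mul_pos_of_posDef (hgpos x) hy)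

end RiemannianMetrics

theorem statement4_general {n : ℕ} {α : E n × E n → ℝ} (hα : IsParametricLagrangian α)
    {b : E n → E n} (hb : ContDiff ℝ 2 b) (hclosed : IsClosedOneForm b)
    (hpos : ∀ x y : E n, y ≠ 0 → 0 < (α + oneForm b) (x, y)) :
    (SatisfiesHamel (α + oneForm b) ↔ SatisfiesHamel α) ∧
      (Rectilinear (α + oneForm b) ↔ Rectilinear α) := by
  constructor
  · exact satisfiesHamel_add_iff_left hα.contDiffAt
      (fun p _ => (contDiff_oneForm hb).contDiffAt)
      (hclosed.satisfiesHamel (hb.differentiable two_ne_zero))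
  · rw [(hα.add_oneForm hb hpos).rectilinear_iff_isExtremal, hα.rectilinear_iff_isExtremal]
    simp only [hclosed.isExtremal_add_oneForm_iff hb hα.contDiffAt]

/-- for a Randers Finsler function `F = α + b_i y^i` with closed deforming
1-form, `F` satisfies the Hamel equations iff `α` does; consequently `(ℝⁿ, F)` is
rectilinear in the standard coordinates iff `(ℝⁿ, α)` is. -/
theorem statement4 {n : ℕ} (g : E n → Matrix (Fin n) (Fin n) ℝ)
    (hgsmooth : ∀ i j : Fin n, ContDiff ℝ (⊤ : ℕ∞) (fun x => g x i j))
    (hgpos : ∀ x : E n, (g x).PosDef)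
    (b : E n → E n) (hbsmooth : ∀ i : Fin n, ContDiff ℝ (⊤ : ℕ∞) (fun x => b x i))
    (hbclosed : ∀ (i s : Fin n) (x : E n),
      pd s (fun x' => b x' i) x = pd i (fun x' => b x' s) x)
    (α F : E n × E n → ℝ)
    (hα : α = fun p => Real.sqrt (∑ i, ∑ j, g p.1 i j * p.2 i * p.2 j))
    (hF : F = fun p => α p + ∑ i, b p.1 i * p.2 i)
    (hFinsler : IsFinsler F) :
    (SatisfiesHamel F ↔ SatisfiesHamel α) ∧ (Rectilinear F ↔ Rectilinear α) := by
  subst hα hF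
  exact statement4_general
    (isParametricLagrangian_riemannianNorm (fun i j => (hgsmooth i j).of_le (by norm_cast)) hgpos)
    (contDiff_pi.2 fun i => (hbsmooth i).of_le (by norm_cast)) hbclosed hFinsler.pos
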